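/- Let k ⊂ K ⊂ L be a tower of finite fields with [L:K] = 2, |k| odd. Then the norm map N_{L/k} : L^× → k^× sends every element of K^× to a square in k^×; consequently it induces a well-defined surjective group homomorphism L^×/K^× → k^×/(k^×)^2, whose kernel has cardinality (|K|+1)/2. -/

import Mathlib

/-- For a tower of finite fields `k ⊆ K ⊆ L` with `[L:K] = 2` and `|k|` odd,
the norm `N_{L/k}` sends `K^×` into the squares of `k^×`, and induces a
well-defined surjective homomorphism `L^×/K^× → k^×/(k^×)²` whose kernel has
cardinality `(|K|+1)/2`. -/
theorem stmt_2 (k K L : Type*) [Field k] [Field K] [Field L]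
    [Algebra k K] [Algebra K L] [Algebra k L] [IsScalarTower k K L]
    [Fintype k] [Fintype K] [Fintype L]
    [DecidableEq k] [DecidableEq K] [DecidableEq L]
    (hodd : Odd (Fintype.card k))
    (hdim : Module.finrank K L = 2) :
    (∀ x : K, x ≠ 0 → ∃ y : k, Algebra.norm k (algebraMap K L x) = y ^ 2) ∧
    ∃ φ : (Lˣ ⧸ (Units.map (algebraMap K L).toMonoidHom).range) →*
        (kˣ ⧸ (powMonoidHom 2 : kˣ →* kˣ).range),
      Function.Surjective φ ∧
      (∀ x : Lˣ, φ (QuotientGroup.mk x) =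
        QuotientGroup.mk (Units.map (Algebra.norm k : L →* k) x)) ∧
      Nat.card φ.ker = (Fintype.card K + 1) / 2 := by
  have hN : ∀ x : K, Algebra.norm k (algebraMap K L x) = (Algebra.norm k x) ^ 2 := by
    intro x
    rw [← Algebra.norm_norm (R := k) (S := K) (A := L), Algebra.norm_algebraMap, hdim, map_pow]
  refine ⟨fun x _ => ⟨_, hN x⟩, ?_⟩
  have hle : (Units.map (algebraMap K L).toMonoidHom).range ≤
      ((powMonoidHom 2 : kˣ →* kˣ).range).comap (Units.map (Algebra.norm k : L →* k)) := by
    rintro _ ⟨x, rfl⟩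
    refine ⟨Units.map (Algebra.norm k : K →* k) x, ?_⟩
    ext
    simpa using (hN x).symm
  have hsurj : Function.Surjective (QuotientGroup.map _ _ _ hle) := by
    intro y
    obtain ⟨y, rfl⟩ := QuotientGroup.mk_surjective y
    obtain ⟨x, rfl⟩ := FiniteField.unitsMap_norm_surjective k L y
    exact ⟨QuotientGroup.mk x, rfl⟩
  refine ⟨QuotientGroup.map _ _ _ hle, hsurj, fun x => rfl, ?_⟩
  have h1 := Subgroup.card_mul_index (QuotientGroup.map _ _ _ hle).ker
  rw [Subgroup.index_ker, MonoidHom.range_eq_top.2 hsurj, Subgroup.card_top] at h1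
  have h2 : Nat.card (kˣ ⧸ (powMonoidHom 2 : kˣ →* kˣ).range) = 2 := by
    change Subgroup.index _ = 2
    rw [IsCyclic.index_powMonoidHom_range, Nat.card_units, Nat.card_eq_fintype_card]
    obtain ⟨m, hm⟩ := hodd
    rw [hm]
    simp
  have h3 : Nat.card (Lˣ ⧸ (Units.map (algebraMap K L).toMonoidHom).range) = Fintype.card K + 1 := by
    have h4 := Subgroup.card_mul_index (Units.map (algebraMap K L).toMonoidHom).range
    have h5 : Nat.card (Units.map (algebraMap K L).toMonoidHom).range = Nat.card Kˣ :=
      (Nat.card_congr (Equiv.ofInjective _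
        (Units.map_injective (algebraMap K L).injective))).symm
    have h6 : Fintype.card L = Fintype.card K ^ 2 := by
      rw [← hdim]; exact Module.card_eq_pow_finrank
    rw [h5, Nat.card_units, Nat.card_units, Nat.card_eq_fintype_card, Nat.card_eq_fintype_card,
      h6] at h4
    change Subgroup.index _ = _
    have h7 : 1 < Fintype.card K := Fintype.one_lt_card
    apply Nat.eq_of_mul_eq_mul_left (Nat.sub_pos_of_lt h7)
    rw [h4, mul_comm, ← Nat.sq_sub_sq, one_pow]
  rw [h2, h3] at h1
  omega
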